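/- Let \(\widehat{N} = \begin{pmatrix} \widehat{A} & \widehat{B} \\ I & O \end{pmatrix}\) where \(\widehat{A}\) and \(\widehat{B}\) are square dual complex matrices of the same order with dual Drazin inverses of indices \(i_{\widehat{A}}\) and \(i_{\widehat{B}}\), respectively. Assume \(\widehat{A}\widehat{A}^\pi \widehat{B} = \widehat{B}\widehat{A}\widehat{A}^\pi\) and \(\widehat{A}\widehat{A}\widehat{A}^D \widehat{B} = O\). Then \(\begin{pmatrix} \sum_{i=0}^{i_{\widehat{B}}-1} \widehat{B}^\pi \widehat{B}^i (\widehat{A}^D)^{2i+1} & \widehat{B}\widehat{B}^D \\ \sum_{i=0}^{i_{\widehat{B}}-1} \widehat{B}^\pi \widehat{B}^i (\widehat{A}^D)^{2i+2} + \widehat{B}^D \widehat{A}^\pi & -\widehat{A}\widehat{A}^\pi \widehat{B}^D \end{pmatrix}\) is a dual Drazin inverse of \(\widehat{N}\). -/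

import Mathlib

open Matrix Finset

abbrev DC := DualNumber ℂ

section Drazin

variable {R : Type*} [Ring R]

/-- An element commuting with `b` commutes with a Drazin inverse of `b`. -/
theorem Commute.drazin_right {q b d : R} {k : ℕ} (h : Commute q b)
    (h1 : b ^ (k + 1) * d = b ^ k) (h2 : d * b * d = d) (h3 : b * d = d * b) :
    Commute q d := by
  have hid : IsIdempotentElem (b * d) := by
    change b * d * (b * d) = b * d
    rw [mul_assoc, ← mul_assoc d b d, h2]
  have hbd : Commute b d := h3
  have hg : b * d = b ^ (k + 1) * d ^ (k + 1) := by
    rw [← hbd.mul_pow, hid.pow_succ_eq]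
  have hg' : b * d = d ^ (k + 1) * b ^ (k + 1) := by
    rw [hg, (hbd.pow_pow (k + 1) (k + 1)).eq]
  have hz : b ^ (k + 1) * (1 - b * d) = 0 := by
    rw [mul_sub, mul_one, ← mul_assoc, ← pow_succ, pow_succ' b (k + 1), mul_assoc, h1,
      ← pow_succ', sub_self]
  have hz' : (1 - b * d) * b ^ (k + 1) = 0 := by
    have : Commute (b ^ (k + 1)) (1 - b * d) :=
      (Commute.one_right _).sub_right ((Commute.refl b).mul_right hbd |>.pow_left _)
    rw [← this.eq, hz]
  have hq := (h.pow_right (k + 1)).eq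
  have e1 : b * d * q * (1 - b * d) = 0 := by
    calc b * d * q * (1 - b * d) = d ^ (k + 1) * b ^ (k + 1) * q * (1 - b * d) := by
          rw [← hg']
      _ = d ^ (k + 1) * q * (b ^ (k + 1) * (1 - b * d)) := by
          rw [mul_assoc (d ^ (k + 1)), ← hq]; simp only [mul_assoc]
      _ = 0 := by rw [hz, mul_zero]
  have e2 : (1 - b * d) * q * (b * d) = 0 := by
    calc (1 - b * d) * q * (b * d) = (1 - b * d) * (q * b ^ (k + 1)) * d ^ (k + 1) := by
          rw [hg]; simp only [mul_assoc]
      _ = 0 := by rw [hq, ← mul_assoc, hz', zero_mul, zero_mul]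
  have hgq : b * d * q = q * (b * d) := by
    linear_combination (norm := noncomm_ring) e1 - e2
  have hdg : d * (b * d) = d := by rw [← mul_assoc, h2]
  calc q * d = q * (b * d) * d := by rw [mul_assoc, h3, h2]
    _ = d * (b * q) * d := by rw [← hgq, h3]; simp only [mul_assoc]
    _ = d * (b * d * q) := by rw [← h.eq, hgq]; simp only [mul_assoc]
    _ = d * q := by rw [← mul_assoc, hdg]

/-- If `g` fixes `r` from the left, nilpotency of `r * g` gives nilpotency of `r`. -/
theorem IsNilpotent.of_mul_right_of_mul_eq {r g : R} (h : g * r = r)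
    (hn : IsNilpotent (r * g)) : IsNilpotent r := by
  obtain ⟨k, hk⟩ := hn
  have key : ∀ s : ℕ, r ^ (s + 1) = (r * g) ^ s * r := by
    intro s
    induction s with
    | zero => simp
    | succ s ih =>
      rw [_root_.pow_succ (r * g), mul_assoc, mul_assoc, h, ← mul_assoc, ← ih, ← _root_.pow_succ]
  exact ⟨k + 1, by rw [key, hk, zero_mul]⟩

/-- If `x` is an outer inverse of `a` commuting with `a` and `a * (1 - a * x)` is nilpotent, then
`x` is a Drazin inverse of `a`. -/
theorem exists_pow_succ_mul_eq_pow_of_isNilpotent {a x : R} (h2 : x * a * x = x)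
    (h3 : a * x = x * a) (hn : IsNilpotent (a * (1 - a * x))) :
    ∃ s, a ^ (s + 1) * x = a ^ s := by
  obtain ⟨k, hk⟩ := hn
  have hid : IsIdempotentElem (a * x) := by
    change a * x * (a * x) = a * x
    rw [mul_assoc, ← mul_assoc x a x, h2]
  have hc : Commute a (1 - a * x) :=
    (Commute.one_right _).sub_right ((Commute.refl a).mul_right h3)
  have hk' : (a * (1 - a * x)) ^ (k + 1) = 0 := by rw [pow_succ, hk, zero_mul]
  rw [hc.mul_pow, hid.one_sub.pow_succ_eq, mul_sub, mul_one, ← mul_assoc, ← pow_succ,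
    sub_eq_zero] at hk'
  exact ⟨k + 1, hk'.symm⟩

end Drazin

section Blocks

variable {n K : Type*} [Fintype n] [DecidableEq n] [Ring K]

theorem fromBlocks_diag_pow (a d : Matrix n n K) (k : ℕ) :
    Matrix.fromBlocks a 0 0 d ^ k = Matrix.fromBlocks (a ^ k) 0 0 (d ^ k) := by
  induction k with
  | zero => simp
  | succ k ih => simp [pow_succ, ih, Matrix.fromBlocks_multiply]

theorem isNilpotent_fromBlocks_diag {a : Matrix n n K} (h : IsNilpotent a) :
    IsNilpotent (Matrix.fromBlocks a 0 0 a) := by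
  obtain ⟨k, hk⟩ := h
  exact ⟨k, by rw [fromBlocks_diag_pow, hk, Matrix.fromBlocks_zero]⟩

/-- A companion block matrix with commuting nilpotent top row is nilpotent. -/
theorem isNilpotent_fromBlocks_companion {q b p : Matrix n n K} (hq : IsNilpotent q)
    (hb : IsNilpotent b) (hqb : q * b = b * q) (hpq : p * q = q) (hqp : q * p = q)
    (hpb : p * b = b) (hbp : b * p = b) :
    IsNilpotent (Matrix.fromBlocks q b p 0) := by
  have hsq : Matrix.fromBlocks q b p 0 ^ 2 =
      Matrix.fromBlocks q 0 0 q * Matrix.fromBlocks q b p 0 + Matrix.fromBlocks b 0 0 b := by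
    simp [pow_two, Matrix.fromBlocks_multiply, Matrix.fromBlocks_add, hpq, hqp, hpb, hbp]
  have c1 : Commute (Matrix.fromBlocks q 0 0 q) (Matrix.fromBlocks q b p 0) := by
    simp [Commute, SemiconjBy, Matrix.fromBlocks_multiply, hqb, hpq, hqp]
  have c2 : Commute (Matrix.fromBlocks b 0 0 b) (Matrix.fromBlocks q b p 0) := by
    simp [Commute, SemiconjBy, Matrix.fromBlocks_multiply, hqb, hpb, hbp]
  have c3 : Commute (Matrix.fromBlocks q 0 0 q) (Matrix.fromBlocks b 0 0 b) := by
    simp [Commute, SemiconjBy, Matrix.fromBlocks_multiply, hqb]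
  refine IsNilpotent.of_pow (m := 2) ?_
  rw [hsq]
  exact Commute.isNilpotent_add (c3.mul_left c2.symm)
    (c1.isNilpotent_mul_right (isNilpotent_fromBlocks_diag hq)) (isNilpotent_fromBlocks_diag hb)

end Blocks

section BlockDrazin

variable {R : Type*} [Ring R]

theorem pow_mul_one_sub_eq_zero {a d : R} {k : ℕ} (h1 : a ^ (k + 1) * d = a ^ k) :
    a ^ k * (1 - a * d) = 0 := by
  rw [mul_sub, mul_one, ← mul_assoc, ← pow_succ, h1, sub_self]

theorem isNilpotent_mul_of_mul_mul_eq {a p : R} {k : ℕ} (hp : p * a * p = a * p)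
    (h : a ^ k * p = 0) : IsNilpotent (a * p) := by
  have key : ∀ s : ℕ, (a * p) ^ (s + 1) = a ^ (s + 1) * p := by
    intro s
    induction s with
    | zero => simp
    | succ s ih =>
      rw [pow_succ, ih, mul_assoc, ← mul_assoc p, hp, ← mul_assoc, ← pow_succ]
  exact ⟨k + 1, by rw [key, pow_succ', mul_assoc, h, mul_zero]⟩

variable {AD B BD : R} {k : ℕ}

theorem mul_sum_eq_mul_self (hB1 : B ^ (k + 1) * BD = B ^ k)
    (hADB : AD * B = 0) :
    AD * ∑ i ∈ Finset.range k, (1 - B * BD) * B ^ i * AD ^ (2 * i + 1) = AD * AD := by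
  have hg : AD * (1 - B * BD) = AD := by
    rw [mul_sub, mul_one, ← mul_assoc, hADB, zero_mul, sub_zero]
  cases k with
  | zero =>
    have h : B * BD = 1 := by simpa using hB1
    have : AD = 0 := by rw [← hg, h, sub_self, mul_zero]
    simp [this]
  | succ k =>
    rw [Finset.sum_range_succ', mul_add, Finset.mul_sum, Finset.sum_eq_zero]
    · simp only [pow_zero, mul_zero, zero_add, pow_one, mul_one, ← mul_assoc, hg]
    · intro i _
      rw [← mul_assoc, ← mul_assoc, hg, pow_succ', ← mul_assoc, hADB, zero_mul, zero_mul]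

theorem mul_sum_eq_zero {q : R} (hqB : Commute q B) (hqBD : Commute q BD) (hq : q * AD = 0) :
    q * ∑ i ∈ Finset.range k, (1 - B * BD) * B ^ i * AD ^ (2 * i + 1) = 0 := by
  rw [Finset.mul_sum, Finset.sum_eq_zero]
  intro i _
  have h : Commute q ((1 - B * BD) * B ^ i) :=
    ((Commute.one_right q).sub_right (hqB.mul_right hqBD)).mul_right (hqB.pow_right i)
  rw [← mul_assoc, h.eq, mul_assoc, pow_succ', ← mul_assoc q, hq, zero_mul, mul_zero]

theorem mul_sum_eq_sum_mul_sub {A : R} (hA2 : AD * A * AD = AD) (hA3 : A * AD = AD * A)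
    (hB1 : B ^ (k + 1) * BD = B ^ k) (hB3 : B * BD = BD * B) :
    B * ∑ i ∈ Finset.range k, (1 - B * BD) * B ^ i * AD ^ (2 * i + 2) =
      (∑ i ∈ Finset.range k, (1 - B * BD) * B ^ i * AD ^ (2 * i + 1)) * A -
        (1 - B * BD) * (A * AD) := by
  have hc : Commute B (1 - B * BD) :=
    (Commute.one_right B).sub_right ((Commute.refl B).mul_right hB3)
  have hz : (1 - B * BD) * B ^ k = 0 := by
    rw [← (hc.pow_left k).eq, pow_mul_one_sub_eq_zero hB1]
  set t : ℕ → R := fun i => (1 - B * BD) * B ^ i * (AD ^ (2 * i) * (A * AD)) with ht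
  have h1 : B * ∑ i ∈ Finset.range k, (1 - B * BD) * B ^ i * AD ^ (2 * i + 2) =
      ∑ i ∈ Finset.range k, t (i + 1) := by
    rw [Finset.mul_sum]
    refine Finset.sum_congr rfl fun i _ => ?_
    have e : AD ^ (2 * (i + 1)) * (A * AD) = AD ^ (2 * i + 2) := by
      rw [mul_add, mul_one, pow_succ AD (2 * i + 1), mul_assoc, ← mul_assoc AD A AD, hA2]
    rw [ht]
    simp only [e]
    rw [← mul_assoc, ← mul_assoc, hc.eq, mul_assoc _ B, ← pow_succ']
  have h2 : (∑ i ∈ Finset.range k, (1 - B * BD) * B ^ i * AD ^ (2 * i + 1)) * A =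
      ∑ i ∈ Finset.range k, t i := by
    rw [Finset.sum_mul]
    refine Finset.sum_congr rfl fun i _ => ?_
    rw [ht]
    simp only [hA3, pow_succ, mul_assoc]
  have h3 : t k = 0 := by simp only [ht, hz, zero_mul]
  have h4 : t 0 = (1 - B * BD) * (A * AD) := by simp [ht]
  have h5 := Finset.sum_range_succ t k
  rw [Finset.sum_range_succ', h3, h4, add_zero] at h5
  rw [h1, h2, ← h5, add_sub_cancel_right]

end BlockDrazin

section Companion

variable {n K : Type*} [Fintype n] [DecidableEq n] [Ring K]

set_option maxHeartbeats 400000 in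
/-- A Drazin inverse of the companion block matrix with top row `A`, `B`. -/
theorem drazin_fromBlocks_companion (A AD B BD : Matrix n n K) (iA iB : ℕ)
    (hA1 : A ^ (iA + 1) * AD = A ^ iA) (hA2 : AD * A * AD = AD) (hA3 : A * AD = AD * A)
    (hB1 : B ^ (iB + 1) * BD = B ^ iB) (hB2 : BD * B * BD = BD) (hB3 : B * BD = BD * B)
    (hc : A * (1 - A * AD) * B = B * (A * (1 - A * AD)))
    (h0 : A * (A * AD) * B = 0) :
    let Api := (1 : Matrix n n K) - A * AD
    let Bpi := (1 : Matrix n n K) - B * BD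
    let N := Matrix.fromBlocks A B 1 0
    let X := Matrix.fromBlocks
      (∑ i ∈ Finset.range iB, Bpi * B ^ i * AD ^ (2 * i + 1)) (B * BD)
      ((∑ i ∈ Finset.range iB, Bpi * B ^ i * AD ^ (2 * i + 2)) + BD * Api)
      (-(A * Api * BD))
    ∃ s, N ^ (s + 1) * X = N ^ s ∧ X * N * X = X ∧ N * X = X * N := by
  intro Api Bpi N X
  have hAD : AD * (A * AD) = AD := by rw [← mul_assoc, hA2]
  have hAAD : A * AD * AD = AD := by rw [hA3, hA2]
  have heB : A * AD * B = 0 := by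
    calc A * AD * B = AD * A * AD * A * B := by rw [hA2, hA3]
      _ = AD * (A * (AD * A) * B) := by simp only [mul_assoc]
      _ = 0 := by rw [← hA3, h0, mul_zero]
  have hADB : AD * B = 0 := by rw [← hAD, mul_assoc, heB, mul_zero]
  set Q := A * (1 - A * AD) with hQ
  have hQB : Commute Q B := hc
  have hQBD : Commute Q BD := hQB.drazin_right hB1 hB2 hB3
  have hQAD : Q * AD = 0 := by
    rw [hQ, mul_assoc, sub_mul, one_mul, hAAD, sub_self, mul_zero]
  have hAB : A * B = B * Q := by
    rw [← hc, hQ, mul_sub, mul_one, sub_mul, h0, sub_zero]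
  have s1 := mul_sum_eq_mul_self (AD := AD) hB1 hADB
  have s2 := mul_sum_eq_zero (k := iB) hQB hQBD hQAD
  have s3 := mul_sum_eq_sum_mul_sub hA2 hA3 hB1 hB3
  have s4 : (∑ i ∈ Finset.range iB, Bpi * B ^ i * AD ^ (2 * i + 1)) * AD =
      ∑ i ∈ Finset.range iB, Bpi * B ^ i * AD ^ (2 * i + 2) := by
    rw [Finset.sum_mul]
    exact Finset.sum_congr rfl fun i _ => by rw [mul_assoc, ← pow_succ]
  have s5 : BD * ∑ i ∈ Finset.range iB, Bpi * B ^ i * AD ^ (2 * i + 1) = 0 := by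
    have : BD * Bpi = 0 := by
      simp only [Bpi]
      rw [mul_sub, mul_one, ← mul_assoc, hB2, sub_self]
    rw [Finset.mul_sum]
    exact Finset.sum_eq_zero fun i _ => by rw [← mul_assoc, ← mul_assoc, this, zero_mul, zero_mul]
  have s6 : (∑ i ∈ Finset.range iB, Bpi * B ^ i * AD ^ (2 * i + 1)) * (A * AD) =
      ∑ i ∈ Finset.range iB, Bpi * B ^ i * AD ^ (2 * i + 1) := by
    rw [Finset.sum_mul]
    exact Finset.sum_congr rfl fun i _ => by rw [pow_succ, mul_assoc, mul_assoc (AD ^ _), hAD]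
  simp only [N, X]
  simp only [Api, Bpi] at *
  generalize (∑ i ∈ Finset.range iB, (1 - B * BD) * B ^ i * AD ^ (2 * i + 1)) = S at *
  generalize (∑ i ∈ Finset.range iB, (1 - B * BD) * B ^ i * AD ^ (2 * i + 2)) = T at *
  subst s4
  have hAS : A * S = A * AD := by
    calc A * S = Q * S + A * (A * (AD * S)) := by rw [hQ]; noncomm_ring
      _ = A * AD := by rw [s2, s1, zero_add, ← mul_assoc A AD, hAAD]
  have hSB : S * B = 0 := by rw [← s6, mul_assoc, heB, mul_zero]
  have hSAB : S * A * B = 0 := by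
    calc S * A * B = S * (A * AD) * A * B := by rw [s6]
      _ = S * (A * (AD * A) * B) := by simp only [mul_assoc]
      _ = 0 := by rw [← hA3, h0, mul_zero]
  have hSS : S * S = S * AD := by
    calc S * S = S * (A * AD) * S := by rw [s6]
      _ = S * A * (AD * S) := by simp only [mul_assoc]
      _ = S * (A * AD) * AD := by rw [s1]; simp only [mul_assoc]
      _ = S * AD := by rw [s6]
  have hgg : B * BD * (B * BD) = B * BD := by rw [mul_assoc, ← mul_assoc BD, hB2]
  have hBDg : B * BD * BD = BD := by rw [hB3, hB2]
  have hgQ : B * BD * Q = Q * (B * BD) := (hQB.mul_right hQBD).eq.symm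
  have hNX : fromBlocks A B 1 0 * fromBlocks S (B * BD) (S * AD + BD * (1 - A * AD)) (-(Q * BD)) =
      fromBlocks (S * A + B * BD) 0 S (B * BD) := by
    rw [fromBlocks_multiply]
    congr 1
    · rw [mul_add, s3, hAS]
      noncomm_ring
    · rw [← mul_assoc, hAB, mul_neg, mul_assoc, add_neg_cancel]
    · simp
    · simp
  have hXN : fromBlocks S (B * BD) (S * AD + BD * (1 - A * AD)) (-(Q * BD)) * fromBlocks A B 1 0 =
      fromBlocks (S * A + B * BD) 0 S (B * BD) := by
    rw [fromBlocks_multiply]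
    congr 1
    · simp
    · simp [hSB]
    · have h1 : S * AD * A = S := by rw [mul_assoc, ← hA3, s6]
      have h2 : BD * (1 - A * AD) * A = Q * BD := by
        rw [hQBD.eq, hQ, mul_assoc, sub_mul, one_mul, mul_assoc A AD, ← hA3, mul_sub A, mul_one]
      rw [add_mul, h1, h2]
      simp
    · rw [add_mul, mul_assoc S, hADB, mul_assoc BD, sub_mul, heB, hB3]
      simp
  have h2 : fromBlocks S (B * BD) (S * AD + BD * (1 - A * AD)) (-(Q * BD)) * fromBlocks A B 1 0 *
      fromBlocks S (B * BD) (S * AD + BD * (1 - A * AD)) (-(Q * BD)) =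
      fromBlocks S (B * BD) (S * AD + BD * (1 - A * AD)) (-(Q * BD)) := by
    rw [hXN, fromBlocks_multiply]
    congr 1
    · rw [add_mul, mul_assoc, hAS, s6, mul_assoc, s5]
      simp
    · rw [add_mul, ← mul_assoc, hSAB, hgg]
      simp
    · rw [hSS, mul_add, ← mul_assoc (B * BD) S, mul_assoc B BD S, s5,
        ← mul_assoc (B * BD) BD, hBDg]
      simp
    · rw [← mul_assoc S, hSB, mul_neg, ← mul_assoc, hgQ, mul_assoc, hBDg]
      simp
  suffices hn : IsNilpotent (fromBlocks A B 1 0 * (1 - fromBlocks (S * A + B * BD) 0 S (B * BD))) by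
    obtain ⟨s, hs⟩ := exists_pow_succ_mul_eq_pow_of_isNilpotent h2 (hNX.trans hXN.symm)
      (by rwa [hNX])
    exact ⟨s, hs, h2, hNX.trans hXN.symm⟩
  have hAf := pow_mul_one_sub_eq_zero hA1
  have hBc := pow_mul_one_sub_eq_zero hB1
  have hff : (1 - A * AD) * (1 - A * AD) = 1 - A * AD :=
    IsIdempotentElem.one_sub (by change A * AD * (A * AD) = _; rw [mul_assoc, hAD])
  have hfA : (1 - A * AD) * A = Q := by
    rw [hQ, sub_mul, one_mul, mul_assoc A AD, ← hA3, mul_sub, mul_one]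
  have hfB : (1 - A * AD) * B = B := by rw [sub_mul, one_mul, heB, sub_zero]
  have hADf : AD * (1 - A * AD) = 0 := by rw [mul_sub, mul_one, hAD, sub_self]
  have hSf : S * (1 - A * AD) = 0 := by rw [mul_sub, mul_one, s6, sub_self]
  have hcc : (1 - B * BD) * (1 - B * BD) = 1 - B * BD := IsIdempotentElem.one_sub hgg
  have hcB : (1 - B * BD) * B = B * (1 - B * BD) := by
    rw [sub_mul, one_mul, mul_assoc B BD, ← hB3, mul_sub, mul_one]
  have hcQ : (1 - B * BD) * Q = Q * (1 - B * BD) := by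
    rw [sub_mul, one_mul, hgQ, mul_sub, mul_one]
  have hcS : (1 - B * BD) * S = S := by
    rw [sub_mul, one_mul, mul_assoc, s5, mul_zero, sub_zero]
  have hADc : AD * (1 - B * BD) = AD := by
    rw [mul_sub, mul_one, ← mul_assoc, hADB, zero_mul, sub_zero]
  have hSc : S * (1 - B * BD) = S := by
    rw [mul_sub, mul_one, ← mul_assoc, hSB, zero_mul, sub_zero]
  have hfQ : (1 - A * AD) * Q = Q := by rw [← hfA, ← mul_assoc, hff]
  have hQf : Q * (1 - A * AD) = Q := by rw [hQ, mul_assoc, hff]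
  have hQnil : IsNilpotent Q := isNilpotent_mul_of_mul_mul_eq (by rw [hfA, hQf]) hAf
  have hm : 1 - (S * A + B * BD) = (1 - B * BD) * (1 - A * AD) - B * (S * AD) := by
    rw [s3]
    noncomm_ring
  have hAp : A * ((1 - B * BD) * (1 - A * AD)) = Q * (1 - B * BD) := by
    calc A * ((1 - B * BD) * (1 - A * AD)) = Q - A * B * BD * (1 - A * AD) := by
          rw [hQ]; noncomm_ring
      _ = Q - B * BD * (Q * (1 - A * AD)) := by
          rw [hAB, mul_assoc B, hQBD.eq]; simp only [mul_assoc]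
      _ = Q * (1 - B * BD) := by rw [hQf, hgQ, mul_sub, mul_one]
  have hfc : (1 - A * AD) * (1 - B * BD) = (1 - A * AD) - B * BD := by
    rw [mul_sub, mul_one, ← mul_assoc, hfB]
  have hcg : (1 - B * BD) * (B * BD) = 0 := by rw [sub_mul, one_mul, hgg, sub_self]
  generalize hc' : 1 - B * BD = c at *
  generalize hf' : 1 - A * AD = f at *
  have hcfc : c * f * c = c * f := by rw [mul_assoc, hfc, mul_sub, hcg, sub_zero]
  have hpp : c * f * (c * f) = c * f := by rw [← mul_assoc, hcfc, mul_assoc, hff]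
  have hpB : c * f * B = B * c := by rw [mul_assoc, hfB, hcB]
  have hpBp : c * f * (B * (c * f)) = B * (c * f) := by
    rw [← mul_assoc, hpB, mul_assoc, ← mul_assoc c, hcc]
  have hpQ : c * f * Q = Q * c := by rw [mul_assoc, hfQ, hcQ]
  have hpq : c * f * (Q * c) = Q * c := by rw [← mul_assoc, hpQ, mul_assoc, hcc]
  have hqp : Q * c * (c * f) = Q * c := by
    rw [mul_assoc, ← mul_assoc c, hcc, ← mul_assoc, ← hcQ, mul_assoc, hQf]
  have hbp : B * (c * f) * (c * f) = B * (c * f) := by rw [mul_assoc, hpp]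
  have hqb : Q * c * (B * (c * f)) = B * (c * f) * (Q * c) := by
    calc Q * c * (B * (c * f)) = Q * B * (c * c * f) := by
          rw [mul_assoc Q, ← mul_assoc c, hcB]; simp only [mul_assoc]
      _ = B * (Q * c * f) := by rw [hcc, hc]; simp only [mul_assoc]
      _ = B * (c * f) * (Q * c) := by
          rw [← hcQ, mul_assoc c, hQf, hcQ, mul_assoc B, hpq]
  have hqnil : IsNilpotent (Q * c) := Commute.isNilpotent_mul_right hcQ.symm hQnil
  have hbnil : IsNilpotent (B * (c * f)) :=
    isNilpotent_mul_of_mul_mul_eq (by rw [mul_assoc, hpBp]) (by rw [← mul_assoc, hBc, zero_mul])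
  have hBS : c * f * (B * S) = B * S := by rw [← mul_assoc, hpB, mul_assoc, hcS]
  have hSp : S * (c * f) = 0 := by rw [← mul_assoc, hSc, hSf]
  have hADp : AD * (c * f) = 0 := by rw [← mul_assoc, hADc, hADf]
  have hone : (1 : Matrix (n ⊕ n) (n ⊕ n) K) -
      fromBlocks (S * A + B * BD) 0 S (B * BD) = fromBlocks (c * f - B * (S * AD)) 0 (-S) c := by
    rw [← fromBlocks_one, sub_eq_add_neg, fromBlocks_neg, fromBlocks_add, ← hm, ← hc']
    simp [sub_eq_add_neg]
  have hR : fromBlocks A B 1 0 * (1 - fromBlocks (S * A + B * BD) 0 S (B * BD)) =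
      fromBlocks (Q * c - B * S) (B * c) (c * f - B * S * AD) 0 := by
    rw [hone, fromBlocks_multiply]
    congr 1
    · rw [mul_sub, hAp, ← mul_assoc A, hAB, mul_assoc B, ← mul_assoc Q, s2]
      simp [sub_eq_add_neg]
    · simp
    · simp [mul_assoc]
    · simp
  rw [hR]
  refine IsNilpotent.of_mul_right_of_mul_eq (g := fromBlocks (c * f) 0 0 (c * f)) ?_ ?_
  · rw [fromBlocks_multiply]
    congr 1
    · rw [mul_sub, hpq, hBS]
      simp
    · rw [← mul_assoc, hpB, mul_assoc, hcc]
      simp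
    · rw [mul_sub (c * f), hpp, ← mul_assoc, hBS]
      simp
    · simp
  · have hV : fromBlocks (Q * c - B * S) (B * c) (c * f - B * S * AD) 0 *
        fromBlocks (c * f) 0 0 (c * f) = fromBlocks (Q * c) (B * (c * f)) (c * f) 0 := by
      rw [fromBlocks_multiply]
      congr 1
      · rw [sub_mul, hqp, mul_assoc B, hSp]
        simp
      · rw [mul_assoc B, ← mul_assoc c, hcc]
        simp
      · rw [sub_mul, hpp, mul_assoc (B * S), hADp]
        simp
      · simp
    rw [hV]
    exact isNilpotent_fromBlocks_companion hqnil hbnil hqb hpq hqp hpBp hbp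

end Companion

theorem stmt10 {n : ℕ} (A AD B BD : Matrix (Fin n) (Fin n) DC) (iA iB : ℕ)
    (hA1 : A ^ (iA + 1) * AD = A ^ iA) (hA2 : AD * A * AD = AD) (hA3 : A * AD = AD * A)
    (hB1 : B ^ (iB + 1) * BD = B ^ iB) (hB2 : BD * B * BD = BD) (hB3 : B * BD = BD * B)
    (hc : A * (1 - A * AD) * B = B * (A * (1 - A * AD)))
    (h0 : A * (A * AD) * B = 0) :
    let Api := (1 : Matrix (Fin n) (Fin n) DC) - A * AD
    let Bpi := (1 : Matrix (Fin n) (Fin n) DC) - B * BD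
    let N := Matrix.fromBlocks A B 1 0
    let X := Matrix.fromBlocks
      (∑ i ∈ Finset.range iB, Bpi * B ^ i * AD ^ (2 * i + 1)) (B * BD)
      ((∑ i ∈ Finset.range iB, Bpi * B ^ i * AD ^ (2 * i + 2)) + BD * Api)
      (-(A * Api * BD))
    ∃ s, N ^ (s + 1) * X = N ^ s ∧ X * N * X = X ∧ N * X = X * N :=
  drazin_fromBlocks_companion A AD B BD iA iB hA1 hA2 hA3 hB1 hB2 hB3 hc h0
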